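/- arXiv:2201.12034 — 16 statements merged into one kernel-verified Lean document; each statement's English description precedes it below -/
import Mathlib

section
/- Let G be a connected finite simple graph with at least one edge, let A be its adjacency matrix, let x be a strictly positive vector with A x = λ x (for some real λ) and Σ_{v} x_v² = 1, and let S be an independent set of G (no two vertices of S are adjacent). Then Σ_{i ∈ S} x_i² ≤ 1/2. -/
open Finset Matrix

/-- Cioabă–Gregory. If `S` is an independent set of a connected finite
simple graph `G` with at least one edge and `x` is a strictly positive, `ℓ²`-normalized
eigenvector of the adjacency matrix of `G`, then `∑ i ∈ S, x i ² ≤ 1/2`. -/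
theorem independent_set_eigenvector_mass_le_half
    {V : Type*} [Fintype V] [DecidableEq V]
    (G : SimpleGraph V) [DecidableRel G.Adj]
    (hconn : G.Connected) (hedge : G.edgeSet.Nonempty)
    (lam : ℝ) (x : V → ℝ) (hx : ∀ v, 0 < x v)
    (heig : G.adjMatrix ℝ *ᵥ x = lam • x)
    (hnorm : ∑ v, x v ^ 2 = 1)
    (S : Finset V) (hS : ∀ u ∈ S, ∀ v ∈ S, ¬ G.Adj u v) :
    ∑ i ∈ S, x i ^ 2 ≤ 1 / 2 := by
  have h : ∀ v, ∑ u, G.adjMatrix ℝ v u * x u = lam * x v := fun v => by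
    have := congrFun heig v
    simpa only [Matrix.mulVec, dotProduct, Pi.smul_apply, smul_eq_mul] using this
  have ha : ∀ u v, 0 ≤ G.adjMatrix ℝ u v := fun u v => by
    rw [SimpleGraph.adjMatrix_apply]; split_ifs <;> norm_num
  have hlam : 0 < lam := by
    obtain ⟨e, he⟩ := hedge
    induction e using Sym2.ind with
    | _ u v =>
      rw [SimpleGraph.mem_edgeSet] at he
      have h1 : G.adjMatrix ℝ u v * x v ≤ ∑ w, G.adjMatrix ℝ u w * x w :=
        Finset.single_le_sum (f := fun w => G.adjMatrix ℝ u w * x w)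
          (fun w _ => mul_nonneg (ha u w) (hx w).le) (Finset.mem_univ v)
      rw [h, SimpleGraph.adjMatrix_apply, if_pos he, one_mul] at h1
      exact pos_of_mul_pos_left (lt_of_lt_of_le (hx v) h1) (hx u).le
  have hmul : ∀ T : Finset V, lam * ∑ i ∈ T, x i ^ 2
      = ∑ i ∈ T, ∑ j, x i * (G.adjMatrix ℝ i j * x j) := fun T => by
    rw [Finset.mul_sum]
    refine Finset.sum_congr rfl fun i _ => ?_
    rw [← Finset.mul_sum, h]; ring
  have hle : lam * ∑ i ∈ S, x i ^ 2 ≤ lam * ∑ i ∈ Sᶜ, x i ^ 2 := by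
    rw [hmul, hmul]
    calc ∑ i ∈ S, ∑ j, x i * (G.adjMatrix ℝ i j * x j)
        = ∑ i ∈ S, ∑ j ∈ Sᶜ, x i * (G.adjMatrix ℝ i j * x j) := by
          refine Finset.sum_congr rfl fun i hi => ?_
          symm
          refine Finset.sum_subset (Finset.subset_univ _) fun j _ hj => ?_
          have hj' : j ∈ S := by simpa using hj
          rw [SimpleGraph.adjMatrix_apply, if_neg (hS i hi j hj')]; ring
      _ = ∑ j ∈ Sᶜ, ∑ i ∈ S, x j * (G.adjMatrix ℝ j i * x i) := by
          rw [Finset.sum_comm]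
          refine Finset.sum_congr rfl fun j _ => Finset.sum_congr rfl fun i _ => ?_
          rw [SimpleGraph.adjMatrix_apply, SimpleGraph.adjMatrix_apply]
          simp only [G.adj_comm i j]; ring
      _ ≤ _ := by
          refine Finset.sum_le_sum fun j _ => ?_
          exact Finset.sum_le_sum_of_subset_of_nonneg (Finset.subset_univ _)
            fun i _ _ => mul_nonneg (hx j).le (mul_nonneg (ha j i) (hx i).le)
  have h2 := le_of_mul_le_mul_left hle hlam
  have h3 := Finset.sum_add_sum_compl S (fun i => x i ^ 2)
  rw [hnorm] at h3
  linarith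
end

section
/- Let G be a connected finite simple graph with at least one edge, let A be its adjacency matrix, let x be a strictly positive vector with A x = λ x (for some real λ) and Σ_{v} x_v² = 1, and let S be an independent set of G. Then Σ_{i ∈ S} x_i² = 1/2 if and only if every edge of G has exactly one endpoint in S (i.e., G is bipartite with color classes S and V ∖ S). -/
open Finset Matrix

/-- Cioabă–Gregory, equality case. If `S` is an independent set of a
connected finite simple graph `G` with at least one edge and `x` is a strictly positive,
`ℓ²`-normalized eigenvector of the adjacency matrix of `G`, then `∑ i ∈ S, x i ² = 1/2`
if and only if every edge of `G` has exactly one endpoint in `S`, i.e. `G` is bipartite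
with `S` as one color class. -/
theorem independent_set_eigenvector_mass_eq_half_iff
    {V : Type*} [Fintype V] [DecidableEq V]
    (G : SimpleGraph V) [DecidableRel G.Adj]
    (hconn : G.Connected) (hedge : G.edgeSet.Nonempty)
    (lam : ℝ) (x : V → ℝ) (hx : ∀ v, 0 < x v)
    (heig : G.adjMatrix ℝ *ᵥ x = lam • x)
    (hnorm : ∑ v, x v ^ 2 = 1)
    (S : Finset V) (hS : ∀ u ∈ S, ∀ v ∈ S, ¬ G.Adj u v) :
    (∑ i ∈ S, x i ^ 2 = 1 / 2) ↔ (∀ u v, G.Adj u v → ((u ∈ S ∧ v ∉ S) ∨ (u ∉ S ∧ v ∈ S))) := by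
  have hrow : ∀ u, ∑ v, (if G.Adj u v then x v else 0) = lam * x u := by
    intro u
    have h := congrFun heig u
    simpa [Matrix.mulVec, dotProduct, SimpleGraph.adjMatrix_apply] using h
  obtain ⟨e, he⟩ := hedge
  have hlam : 0 < lam := by
    induction e using Sym2.ind with
    | _ a b =>
      have hab : G.Adj a b := he
      have h1 : 0 < ∑ v, (if G.Adj a v then x v else 0) := by
        apply Finset.sum_pos'
        · intro v _
          split_ifs
          · exact (hx v).le
          · exact le_rfl
        · exact ⟨b, Finset.mem_univ _, by simp [hab, hx b]⟩
      rw [hrow a] at h1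
      exact pos_of_mul_pos_left h1 (hx a).le
  let c : V → ℝ := fun u => if u ∈ S then 1 else 0
  let w : V → V → ℝ := fun u v => x u * (if G.Adj u v then x v else 0)
  have hwsymm : ∀ u v, w u v = w v u := by
    intro u v
    simp only [w, G.adj_comm u v]
    split_ifs <;> ring
  have hw0 : ∀ u v, 0 ≤ w u v := by
    intro u v
    apply mul_nonneg (hx u).le
    split_ifs
    · exact (hx v).le
    · exact le_rfl
  have hwrow : ∀ u, ∑ v, w u v = lam * x u ^ 2 := by
    intro u
    simp only [w]
    rw [← Finset.mul_sum, hrow]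
    ring
  have hm : ∑ u, c u * x u ^ 2 = ∑ i ∈ S, x i ^ 2 := by
    simp [c, Finset.sum_ite_mem]
  have hA : ∑ u, ∑ v, w u v = lam := by
    simp only [hwrow]
    rw [← Finset.mul_sum, hnorm, mul_one]
  have hB : ∑ u, ∑ v, c u * w u v = lam * ∑ i ∈ S, x i ^ 2 := by
    rw [← hm, Finset.mul_sum]
    refine Finset.sum_congr rfl fun u _ => ?_
    rw [← Finset.mul_sum, hwrow]
    ring
  have hB' : ∑ u, ∑ v, c v * w u v = lam * ∑ i ∈ S, x i ^ 2 := by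
    rw [Finset.sum_comm, ← hB]
    refine Finset.sum_congr rfl fun u _ => Finset.sum_congr rfl fun v _ => ?_
    rw [hwsymm]
  have hC : ∀ u v, (1 - c u) * (1 - c v) * w u v = w u v - c u * w u v - c v * w u v := by
    intro u v
    have h0 : c u * c v * w u v = 0 := by
      by_cases hu : u ∈ S
      · by_cases hv : v ∈ S
        · simp [w, hS u hu v hv]
        · simp [c, hv]
      · simp [c, hu]
    linear_combination h0
  have hD : ∑ u, ∑ v, (1 - c u) * (1 - c v) * w u v
      = lam * (1 - 2 * ∑ i ∈ S, x i ^ 2) := by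
    simp only [hC, Finset.sum_sub_distrib]
    rw [hA, hB, hB']
    ring
  have hc : ∀ u, 0 ≤ 1 - c u := by
    intro u
    simp only [c]
    split_ifs <;> norm_num
  have hnn : ∀ u v, 0 ≤ (1 - c u) * (1 - c v) * w u v := fun u v =>
    mul_nonneg (mul_nonneg (hc u) (hc v)) (hw0 u v)
  constructor
  · intro h u v huv
    rw [h] at hD
    have hD0 : ∑ u, ∑ v, (1 - c u) * (1 - c v) * w u v = 0 := by rw [hD]; ring
    rw [Finset.sum_eq_zero_iff_of_nonneg (fun u _ => Finset.sum_nonneg fun v _ => hnn u v)] at hD0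
    have h1 := hD0 u (Finset.mem_univ _)
    rw [Finset.sum_eq_zero_iff_of_nonneg (fun v _ => hnn u v)] at h1
    have h2 := h1 v (Finset.mem_univ _)
    by_cases hu : u ∈ S
    · exact Or.inl ⟨hu, fun hv => hS u hu v hv huv⟩
    · by_cases hv : v ∈ S
      · exact Or.inr ⟨hu, hv⟩
      · simp [c, w, hu, hv, huv, (hx u).ne', (hx v).ne'] at h2
  · intro h
    have hD0 : ∑ u, ∑ v, (1 - c u) * (1 - c v) * w u v = 0 := by
      refine Finset.sum_eq_zero fun u _ => Finset.sum_eq_zero fun v _ => ?_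
      by_cases huv : G.Adj u v
      · rcases h u v huv with ⟨hu, _⟩ | ⟨_, hv⟩
        · simp [c, hu]
        · simp [c, hv]
      · simp [w, huv]
    rw [hD] at hD0
    rcases mul_eq_zero.mp hD0 with h1 | h1
    · exact absurd h1 hlam.ne'
    · linarith
end

section
/- Let k ≥ 2, let H = (V, E) be a k-uniform hypergraph with at least one edge, let (ρ, y) be a normalized positive eigenpair of H, and let S ⊆ V satisfy |e ∩ S| ≤ 1 for every edge e ∈ E. Then Σ_{i ∈ S} y_i^k ≤ 1/k. -/
open Finset

/-- If `S` is a strongly independent set (every edge meets `S` in at most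
one vertex) of a `k`-uniform hypergraph `H = (V, E)` with at least one edge, and `(ρ, y)`
is a normalized positive eigenpair of `H`, then `∑ i ∈ S, y i ^ k ≤ 1/k`. -/
theorem hypergraph_independent_set_mass_le
    {V : Type*} [Fintype V] [DecidableEq V]
    (k : ℕ) (hk : 2 ≤ k)
    (E : Finset (Finset V)) (huniform : ∀ e ∈ E, e.card = k) (hE : E.Nonempty)
    (ρ : ℝ) (y : V → ℝ) (hy : ∀ v, 0 < y v)
    (heig : ∀ i : V, ρ * y i ^ (k - 1) =
      ∑ e ∈ E.filter (fun e => i ∈ e), ∏ v ∈ e.erase i, y v)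
    (hnorm : ∑ v, y v ^ k = 1)
    (S : Finset V) (hS : ∀ e ∈ E, (e ∩ S).card ≤ 1) :
    ∑ i ∈ S, y i ^ k ≤ 1 / k := by
  have key : ∀ T : Finset V, ρ * ∑ i ∈ T, y i ^ k =
      ∑ e ∈ E, ((e ∩ T).card : ℝ) * ∏ v ∈ e, y v := by
    intro T
    have h1 : ∀ i ∈ T, ρ * y i ^ k = ∑ e ∈ E, if i ∈ e then ∏ v ∈ e, y v else 0 := by
      intro i _
      have hk' : y i ^ k = y i ^ (k - 1) * y i := by
        rw [← pow_succ]
        congr 1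
        omega
      rw [hk', ← mul_assoc, heig i, Finset.sum_mul, Finset.sum_filter]
      refine Finset.sum_congr rfl fun e _ => ?_
      split_ifs with h
      · exact Finset.prod_erase_mul e y h
      · rfl
    rw [Finset.mul_sum, Finset.sum_congr rfl h1, Finset.sum_comm]
    refine Finset.sum_congr rfl fun e _ => ?_
    rw [← Finset.sum_filter, Finset.sum_const, nsmul_eq_mul, Finset.filter_mem_eq_inter,
      Finset.inter_comm]
  have hpos : ∀ e : Finset V, 0 < ∏ v ∈ e, y v := fun e => Finset.prod_pos fun v _ => hy v
  have hW : 0 < ∑ e ∈ E, ∏ v ∈ e, y v := Finset.sum_pos (fun e _ => hpos e) hE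
  have hV : ρ = k * ∑ e ∈ E, ∏ v ∈ e, y v := by
    have h := key Finset.univ
    rw [hnorm, mul_one] at h
    rw [h, Finset.mul_sum]
    refine Finset.sum_congr rfl fun e he => ?_
    rw [Finset.inter_univ, huniform e he]
  have hT : ρ * ∑ i ∈ S, y i ^ k ≤ ∑ e ∈ E, ∏ v ∈ e, y v := by
    rw [key S]
    refine Finset.sum_le_sum fun e he => ?_
    have h1 : ((e ∩ S).card : ℝ) ≤ 1 := by exact_mod_cast hS e he
    exact mul_le_of_le_one_left (hpos e).le h1
  have hk0 : (0 : ℝ) < k := by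
    have : 0 < k := by omega
    exact_mod_cast this
  rw [le_div_iff₀ hk0]
  rw [hV] at hT
  refine le_of_mul_le_mul_right ?_ hW
  linarith
end

section
/- Let k ≥ 2, let H = (V, E) be a k-uniform hypergraph with at least one edge, let (ρ, y) be a normalized positive eigenpair of H, and let S ⊆ V satisfy |e ∩ S| ≤ 1 for every edge e ∈ E. Then Σ_{i ∈ S} y_i^k = 1/k if and only if every edge e ∈ E satisfies |e ∩ S| = 1 (i.e., S is a color class of a k-partite structure on H). -/
open Finset

/-- If `S` is a strongly independent set (every edge meets `S` in at most
one vertex) of a `k`-uniform hypergraph `H = (V, E)` with at least one edge, and `(ρ, y)`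
is a normalized positive eigenpair of `H`, then `∑ i ∈ S, y i ^ k = 1/k` if and only if
every edge meets `S` in exactly one vertex (i.e. `S` is a color class of a `k`-partite
structure on `H`). -/
theorem hypergraph_independent_set_mass_eq_iff
    {V : Type*} [Fintype V] [DecidableEq V]
    (k : ℕ) (hk : 2 ≤ k)
    (E : Finset (Finset V)) (huniform : ∀ e ∈ E, e.card = k) (hE : E.Nonempty)
    (ρ : ℝ) (y : V → ℝ) (hy : ∀ v, 0 < y v)
    (heig : ∀ i : V, ρ * y i ^ (k - 1) =
      ∑ e ∈ E.filter (fun e => i ∈ e), ∏ v ∈ e.erase i, y v)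
    (hnorm : ∑ v, y v ^ k = 1)
    (S : Finset V) (hS : ∀ e ∈ E, (e ∩ S).card ≤ 1) :
    (∑ i ∈ S, y i ^ k = 1 / k) ↔ (∀ e ∈ E, (e ∩ S).card = 1) := by
  have key : ∀ T : Finset V, ρ * ∑ i ∈ T, y i ^ k
      = ∑ e ∈ E, ((e ∩ T).card : ℝ) * ∏ v ∈ e, y v := by
    intro T
    have h1 : ∀ i ∈ T, ρ * y i ^ k = ∑ e ∈ E, if i ∈ e then ∏ v ∈ e, y v else 0 := by
      intro i _
      have hk1 : y i ^ k = y i ^ (k - 1) * y i := by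
        rw [← pow_succ]
        congr 1
        omega
      rw [hk1, ← mul_assoc, heig i, Finset.sum_mul, Finset.sum_filter]
      refine Finset.sum_congr rfl fun e _ => ?_
      split_ifs with h
      · exact Finset.prod_erase_mul e y h
      · rfl
    rw [Finset.mul_sum, Finset.sum_congr rfl h1, Finset.sum_comm]
    refine Finset.sum_congr rfl fun e _ => ?_
    rw [← Finset.sum_filter, Finset.sum_const, nsmul_eq_mul, Finset.filter_mem_eq_inter,
      Finset.inter_comm]
  have hP : ∀ e ∈ E, 0 < ∏ v ∈ e, y v := fun e _ => Finset.prod_pos fun v _ => hy v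
  have hW : 0 < ∑ e ∈ E, ∏ v ∈ e, y v := Finset.sum_pos hP hE
  have hk0 : (0 : ℝ) < k := by
    have : 0 < k := by omega
    exact_mod_cast this
  have hρ : ρ = k * ∑ e ∈ E, ∏ v ∈ e, y v := by
    have h := key Finset.univ
    rw [hnorm, mul_one] at h
    rw [h, Finset.mul_sum]
    refine Finset.sum_congr rfl fun e he => ?_
    rw [Finset.inter_univ, huniform e he]
  have hSk := key S
  have hle : ∀ e ∈ E, ((e ∩ S).card : ℝ) * ∏ v ∈ e, y v ≤ ∏ v ∈ e, y v := by
    intro e he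
    have h1 : ((e ∩ S).card : ℝ) ≤ 1 := by exact_mod_cast hS e he
    exact mul_le_of_le_one_left (hP e he).le h1
  have h2 : (∑ i ∈ S, y i ^ k = 1 / k) ↔
      ∑ e ∈ E, ((e ∩ S).card : ℝ) * ∏ v ∈ e, y v = ∑ e ∈ E, ∏ v ∈ e, y v := by
    rw [← hSk, hρ, eq_div_iff hk0.ne']
    constructor
    · intro h
      linear_combination (∑ e ∈ E, ∏ v ∈ e, y v) * h
    · intro h
      apply mul_left_cancel₀ hW.ne'
      linear_combination h
  rw [h2, Finset.sum_eq_sum_iff_of_le hle]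
  refine forall₂_congr fun e he => ?_
  rw [mul_eq_right₀ (hP e he).ne']
  exact Nat.cast_eq_one
end

section
/- Let t ≥ 1 be an integer and let ρ, α, β, γ, δ, ε be strictly positive reals satisfying the system (BT): ρα² = β² + (t+1)δε, ρβ² = αβ + tβγ, ργ² = β², ρδ² = (t+1)αε, ρε² = αδ. Then (β > α and β > γ and β > δ and β > ε) if and only if (t+1)² < ρ³ − ρ² (equivalently, t < ρ·√(ρ−1) − 1). (This characterizes when the vertices r₁, r₂ of the t-pleated bowtie B_t have spectral rank 1, via the eigenequations of its principal eigenvector written with y(c) = α, y(r₁) = y(r₂) = β, y(r_i) = γ for i ≥ 3, y(ℓ₁) = δ, y(ℓ_j) = ε for j ≥ 2.) -/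
/-- For the system (BT) of eigenequations of the t-pleated bowtie `B_t`,
the entries `β = y(r₁) = y(r₂)` are strictly largest if and only if
`(t+1)² < ρ³ − ρ²` (equivalently `t < ρ·√(ρ−1) − 1`). -/
theorem bowtie_rank_one_iff (t : ℕ) (ht : 1 ≤ t)
    (ρ α β γ δ ε : ℝ)
    (hρ : 0 < ρ) (hα : 0 < α) (hβ : 0 < β) (hγ : 0 < γ) (hδ : 0 < δ) (hε : 0 < ε)
    (h1 : ρ * α ^ 2 = β ^ 2 + (t + 1) * δ * ε)
    (h2 : ρ * β ^ 2 = α * β + t * β * γ)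
    (h3 : ρ * γ ^ 2 = β ^ 2)
    (h4 : ρ * δ ^ 2 = (t + 1) * α * ε)
    (h5 : ρ * ε ^ 2 = α * δ) :
    (β > α ∧ β > γ ∧ β > δ ∧ β > ε) ↔ ((t : ℝ) + 1) ^ 2 < ρ ^ 3 - ρ ^ 2 := by
  have hs : (1 : ℝ) ≤ (t : ℝ) + 1 := by
    have : (0 : ℝ) ≤ (t : ℝ) := Nat.cast_nonneg t
    linarith
  generalize (t : ℝ) + 1 = s at *
  have hde : 0 < δ * ε := mul_pos hδ hε
  have k1 : ρ ^ 2 * (δ * ε) = s * α ^ 2 := by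
    apply mul_right_cancel₀ hde.ne'
    calc ρ ^ 2 * (δ * ε) * (δ * ε) = (ρ * δ ^ 2) * (ρ * ε ^ 2) := by ring
      _ = (s * α * ε) * (α * δ) := by rw [h4, h5]
      _ = _ := by ring
  have k2 : ρ ^ 2 * β ^ 2 = α ^ 2 * (ρ ^ 3 - s ^ 2) := by
    linear_combination (-ρ ^ 2) * h1 - s * k1
  have k3 : ρ ^ 3 * δ ^ 3 = s ^ 2 * α ^ 3 := by
    linear_combination (ρ ^ 2 * δ) * h4 + s * α * k1
  have k4 : δ ^ 3 = s * ε ^ 3 := by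
    apply mul_left_cancel₀ (mul_pos hρ hα).ne'
    linear_combination α * δ * h4 - s * α * ε * h5
  constructor
  · rintro ⟨h, -⟩
    have h' : α ^ 2 < β ^ 2 := by gcongr
    have h6 : ρ ^ 2 * α ^ 2 < ρ ^ 2 * β ^ 2 := by gcongr
    have h7 : α ^ 2 * ρ ^ 2 < α ^ 2 * (ρ ^ 3 - s ^ 2) := by linarith
    have := lt_of_mul_lt_mul_left h7 (by positivity)
    linarith
  · intro h
    have hab : α < β := by
      have h6 : α ^ 2 * ρ ^ 2 < α ^ 2 * (ρ ^ 3 - s ^ 2) := by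
        apply mul_lt_mul_of_pos_left _ (by positivity)
        linarith
      have h7 : ρ ^ 2 * α ^ 2 < ρ ^ 2 * β ^ 2 := by linarith
      have := lt_of_mul_lt_mul_left h7 (by positivity)
      exact lt_of_pow_lt_pow_left₀ 2 hβ.le this
    have hr1 : 1 < ρ := by
      by_contra hc
      push Not at hc
      have : ρ ^ 2 * ρ ≤ ρ ^ 2 * 1 := by gcongr
      nlinarith
    have hgb : γ < β := by
      apply lt_of_pow_lt_pow_left₀ 2 hβ.le
      have : 0 < γ ^ 2 := by positivity
      nlinarith
    have hda : δ < α := by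
      apply lt_of_pow_lt_pow_left₀ 3 hα.le
      have h6 : s ^ 2 * α ^ 3 < ρ ^ 3 * α ^ 3 := by
        apply mul_lt_mul_of_pos_right _ (by positivity)
        have : 0 < ρ ^ 2 := by positivity
        linarith
      rw [← k3] at h6
      exact lt_of_mul_lt_mul_left h6 (by positivity)
    have hed : ε ≤ δ := by
      apply le_of_pow_le_pow_left₀ (n := 3) (by norm_num) hδ.le
      have : 0 < ε ^ 3 := by positivity
      nlinarith
    exact ⟨hab, hgb, by linarith, by linarith⟩
end

section
/- Let t ≥ 1 be an integer and let ρ, α, β, γ, δ, ε be strictly positive reals satisfying the system (BT): ρα² = β² + (t+1)δε, ρβ² = αβ + tβγ, ργ² = β², ρδ² = (t+1)αε, ρε² = αδ. Then: (i) δ³ = (t+1)·ε³ (so δ > ε); (ii) ρ³ > (t+1)²; (iii) α²·(ρ³ − (t+1)²) = ρ²·β²; and (iv) ρ³·δ³ = (t+1)²·α³. -/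
/-- Algebraic identities derived from the system (BT) of eigenequations
of the t-pleated bowtie `B_t`:
(i) `δ³ = (t+1)ε³` (so `δ > ε`); (ii) `ρ³ > (t+1)²`;
(iii) `α²(ρ³ − (t+1)²) = ρ²β²`; (iv) `ρ³δ³ = (t+1)²α³`. -/
theorem bowtie_identities (t : ℕ) (ht : 1 ≤ t)
    (ρ α β γ δ ε : ℝ)
    (hρ : 0 < ρ) (hα : 0 < α) (hβ : 0 < β) (hγ : 0 < γ) (hδ : 0 < δ) (hε : 0 < ε)
    (h1 : ρ * α ^ 2 = β ^ 2 + (t + 1) * δ * ε)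
    (h2 : ρ * β ^ 2 = α * β + t * β * γ)
    (h3 : ρ * γ ^ 2 = β ^ 2)
    (h4 : ρ * δ ^ 2 = (t + 1) * α * ε)
    (h5 : ρ * ε ^ 2 = α * δ) :
    (δ ^ 3 = (t + 1) * ε ^ 3 ∧ δ > ε) ∧
    ρ ^ 3 > ((t : ℝ) + 1) ^ 2 ∧
    α ^ 2 * (ρ ^ 3 - ((t : ℝ) + 1) ^ 2) = ρ ^ 2 * β ^ 2 ∧
    ρ ^ 3 * δ ^ 3 = ((t : ℝ) + 1) ^ 2 * α ^ 3 := by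
  have ht' : (1:ℝ) ≤ t := by exact_mod_cast ht
  have e1 : δ ^ 3 = (t + 1) * ε ^ 3 := by
    apply mul_left_cancel₀ hρ.ne'
    linear_combination δ * h4 - (t + 1) * ε * h5
  have e2 : ρ ^ 2 * (δ * ε) = (t + 1) * α ^ 2 := by
    apply mul_left_cancel₀ (mul_pos hδ hε).ne'
    linear_combination ρ * ε ^ 2 * h4 + (t + 1) * α * ε * h5
  have e3 : α ^ 2 * (ρ ^ 3 - ((t : ℝ) + 1) ^ 2) = ρ ^ 2 * β ^ 2 := by
    linear_combination ρ ^ 2 * h1 + (t + 1) * e2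
  have e4 : ρ ^ 3 * δ ^ 3 = ((t : ℝ) + 1) ^ 2 * α ^ 3 := by
    apply mul_left_cancel₀ hδ.ne'
    linear_combination ρ * (ρ * δ ^ 2 + (t + 1) * α * ε) * h4 + (t + 1) ^ 2 * α ^ 2 * h5
  refine ⟨⟨e1, ?_⟩, ?_, e3, e4⟩
  · have hlt : ε ^ 3 < δ ^ 3 := by
      rw [e1]
      nlinarith [pow_pos hε 3]
    exact lt_of_pow_lt_pow_left₀ 3 hδ.le hlt
  · have hp : 0 < α ^ 2 * (ρ ^ 3 - ((t : ℝ) + 1) ^ 2) := by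
      rw [e3]
      positivity
    have := pos_of_mul_pos_right hp (by positivity)
    linarith
end

section
/- Let t ≥ 1 be an integer and let λ, a, b, c, d, e be strictly positive reals satisfying the system (WT): λa = 2b + (t+1)(d+e), λb = a + (t+1)b + tc, λc = 2b, λd = (t+1)(a+e), λe = a + d. Then (a > b and a > c and a > d and a > e) if and only if 2λ > t + 2 + √(t² + 12t + 4) (equivalently, λ² − (t+2)λ − 2t > 0, i.e., t < (λ² − 2λ)/(λ + 2)). (This characterizes when the vertex c of the clique-shadow of the t-pleated bowtie B_t has spectral rank 1.) -/
/-- For the system (WT) of eigenequations of the clique-shadow of the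
t-pleated bowtie, the center entry `a = x(c)` is strictly largest if and only if
`2λ > t + 2 + √(t² + 12t + 4)`. -/
theorem shadow_rank_one_iff (t : ℕ) (ht : 1 ≤ t)
    (lam a b c d e : ℝ)
    (hlam : 0 < lam) (ha : 0 < a) (hb : 0 < b) (hc : 0 < c) (hd : 0 < d) (he : 0 < e)
    (h1 : lam * a = 2 * b + (t + 1) * (d + e))
    (h2 : lam * b = a + (t + 1) * b + t * c)
    (h3 : lam * c = 2 * b)
    (h4 : lam * d = (t + 1) * (a + e))
    (h5 : lam * e = a + d) :
    (a > b ∧ a > c ∧ a > d ∧ a > e) ↔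
      2 * lam > (t : ℝ) + 2 + Real.sqrt ((t : ℝ) ^ 2 + 12 * t + 4) := by
  have hT : (1 : ℝ) ≤ t := by exact_mod_cast ht
  generalize (t : ℝ) = T at *
  have hTc : 0 < T * c := by positivity
  have hl : T + 1 < lam := by
    by_contra hh
    push Not at hh
    have := mul_le_mul_of_nonneg_right hh hb.le
    linarith
  have key : lam * (a - b) = b * (lam ^ 2 - (T + 2) * lam - 2 * T) := by
    linear_combination (-lam) * h2 - T * h3
  have hcb : c ≤ b := by
    have : 2 * c ≤ lam * c := mul_le_mul_of_nonneg_right (by linarith) hc.le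
    linarith
  have hda : d < a := by
    have h : (lam + T + 1) * (a - d) = 2 * b := by linear_combination h1 - h4
    have h' : 0 < (lam + T + 1) * (a - d) := by linarith
    have := pos_of_mul_pos_right h' (by linarith)
    linarith
  have hed : e < d := by
    have h : (lam + T + 1) * (d - e) = T * lam * e := by
      linear_combination h4 - (T + 1) * h5
    have h' : 0 < (lam + T + 1) * (d - e) := by rw [h]; positivity
    have := pos_of_mul_pos_right h' (by linarith)
    linarith
  have hq : 2 * lam > T + 2 + Real.sqrt (T ^ 2 + 12 * T + 4) ↔
      0 < lam ^ 2 - (T + 2) * lam - 2 * T := by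
    have h0 : 0 < 2 * lam - (T + 2) := by linarith
    have := Real.sqrt_lt' (x := T ^ 2 + 12 * T + 4) h0
    constructor
    · intro h
      have := this.1 (by linarith)
      nlinarith
    · intro h
      have := this.2 (by nlinarith)
      linarith
  rw [hq]
  constructor
  · rintro ⟨hab, -⟩
    have h' : 0 < lam * (a - b) := mul_pos hlam (by linarith)
    rw [key] at h'
    exact pos_of_mul_pos_right h' hb.le
  · intro h
    have h' : 0 < lam * (a - b) := by rw [key]; exact mul_pos hb h
    have := pos_of_mul_pos_right h' hlam.le
    refine ⟨?_, ?_, ?_, ?_⟩ <;> linarith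
end

section
/- Let ρ, α, β, γ, δ, ε be strictly positive reals satisfying the system (BT) with t = 8, namely ρα² = β² + 9δε, ρβ² = αβ + 8βγ, ργ² = β², ρδ² = 9αε, ρε² = αδ, together with the normalization α³ + 2β³ + 8γ³ + δ³ + 9ε³ = 1. Then β > α, β > γ, β > δ, and β > ε. (Equivalently: in the principal eigenvector of the 8-pleated bowtie B₈, the vertices r₁ and r₂ are strictly the most central, so r₁, r₂ have spectral rank 1 in B₈.) -/
/-- For the system (BT) with `t = 8` (the eigenequations of the
8-pleated bowtie `B₈`) together with the normalization `α³ + 2β³ + 8γ³ + δ³ + 9ε³ = 1`,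
the entries `β = y(r₁) = y(r₂)` are strictly the largest: the vertices `r₁, r₂`
have spectral rank 1 in `B₈`. -/
theorem bowtie_eight_rank_one
    (ρ α β γ δ ε : ℝ)
    (hρ : 0 < ρ) (hα : 0 < α) (hβ : 0 < β) (hγ : 0 < γ) (hδ : 0 < δ) (hε : 0 < ε)
    (h1 : ρ * α ^ 2 = β ^ 2 + 9 * δ * ε)
    (h2 : ρ * β ^ 2 = α * β + 8 * β * γ)
    (h3 : ρ * γ ^ 2 = β ^ 2)
    (h4 : ρ * δ ^ 2 = 9 * α * ε)
    (h5 : ρ * ε ^ 2 = α * δ)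
    (hnorm : α ^ 3 + 2 * β ^ 3 + 8 * γ ^ 3 + δ ^ 3 + 9 * ε ^ 3 = 1) :
    β > α ∧ β > γ ∧ β > δ ∧ β > ε := by
  obtain ⟨s, hs⟩ : ∃ s, s = β / γ := ⟨_, rfl⟩
  have hs0 : 0 < s := hs ▸ div_pos hβ hγ
  have hb : β = s * γ := by rw [hs]; field_simp
  have hr : ρ = s ^ 2 := by
    have : γ ^ 2 ≠ 0 := by positivity
    apply mul_right_cancel₀ this
    rw [h3, hb]; ring
  have ha : α = γ * (s ^ 3 - 8) := by
    apply mul_right_cancel₀ hβ.ne'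
    have e : ρ * β ^ 2 = γ * s ^ 3 * β := by rw [hr, pow_two β]; nth_rewrite 1 [hb]; ring
    linarith
  have hde : ρ ^ 2 * (δ * ε) = 9 * α ^ 2 := by
    have : δ * ε ≠ 0 := by positivity
    apply mul_right_cancel₀ this
    linear_combination (ρ * ε ^ 2) * h4 + 9 * α * ε * h5
  have hd3 : ρ ^ 3 * δ ^ 3 = 81 * α ^ 3 := by
    apply mul_right_cancel₀ hδ.ne'
    linear_combination ρ * (ρ * δ ^ 2 + 9 * α * ε) * h4 + 81 * α ^ 2 * h5
  have he3 : ρ ^ 3 * ε ^ 3 = 9 * α ^ 3 := by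
    apply mul_right_cancel₀ hε.ne'
    linear_combination ρ * (ρ * ε ^ 2 + α * δ) * h5 + α ^ 2 * h4
  have hx8 : 0 < s ^ 3 - 8 := by
    rw [ha] at hα
    exact (mul_pos_iff_of_pos_left hγ).1 hα
  have key : (s ^ 3 - 8) ^ 2 * (s ^ 6 - 81) = s ^ 6 := by
    have : γ ^ 2 ≠ 0 := by positivity
    apply mul_right_cancel₀ this
    rw [hr, ha] at hde
    rw [hr, ha, hb] at h1
    linear_combination s ^ 4 * h1 + 9 * hde
  have h81 : 0 < s ^ 6 - 81 := by
    have h : 0 < (s ^ 3 - 8) ^ 2 * (s ^ 6 - 81) := by rw [key]; positivity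
    exact (mul_pos_iff_of_pos_left (by positivity)).1 h
  have hlt : s ^ 3 - 8 < s := by
    by_contra hc
    push Not at hc
    have h2166 : 2.166 < s := by
      by_contra h
      push Not at h
      have : s ^ 2 ≤ 2.166 ^ 2 := by gcongr
      have h' : s * s ^ 2 ≤ s * 2.166 ^ 2 := by gcongr
      have e : s * s ^ 2 = s ^ 3 := by ring
      rw [e] at h'
      norm_num at h' h
      linarith
    have hv : 4.691 < s ^ 2 := by
      have : (2.166 : ℝ) ^ 2 < s ^ 2 := by gcongr
      norm_num at this ⊢
      linarith
    have h6 : s ^ 2 * (s ^ 6 - 81) ≤ s ^ 6 := by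
      calc _ ≤ (s ^ 3 - 8) ^ 2 * (s ^ 6 - 81) := by gcongr
        _ = _ := key
    have e : s ^ 6 = (s ^ 2) ^ 3 := by ring
    rw [e] at h6
    generalize s ^ 2 = v at hv h6
    have hv2 : 22 < v ^ 2 := by clear * - hv; nlinarith
    have : 81 < v ^ 2 * (v - 1) := by clear * - hv hv2; nlinarith
    have h7 : 0 < v * (v ^ 2 * (v - 1) - 81) := mul_pos (by linarith) (by linarith)
    linarith
  have hab : α < β := by 
    rw [ha, hb, mul_comm s]
    exact mul_lt_mul_of_pos_left hlt hγ
  have hr3 : 81 < ρ ^ 3 := by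
    have e : (s ^ 2) ^ 3 = s ^ 6 := by ring
    rw [hr, e]; linarith
  have hda : δ < α := by
    apply lt_of_pow_lt_pow_left₀ 3 hα.le
    have : 0 < δ ^ 3 := by positivity
    have := mul_lt_mul_of_pos_right hr3 this
    linarith
  have hea : ε < α := by
    apply lt_of_pow_lt_pow_left₀ 3 hα.le
    have : 0 < ε ^ 3 := by positivity
    have := mul_lt_mul_of_pos_right hr3 this
    linarith
  have hs1 : 1 < s := by
    by_contra h
    push Not at h
    have : s ^ 3 ≤ 1 := pow_le_one₀ hs0.le h
    linarith
  refine ⟨hab, ?_, by linarith, by linarith⟩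
  rw [hb]
  exact lt_mul_of_one_lt_left hγ hs1
end

section
/- Let λ, a, b, c, d, e be strictly positive reals satisfying the system (WT) with t = 8, namely λa = 2b + 9(d+e), λb = a + 9b + 8c, λc = 2b, λd = 9(a+e), λe = a + d. Then a > b, a > c, a > d, and a > e. (Equivalently: in the principal eigenvector of the co-occurrence matrix of the 8-pleated bowtie B₈, the vertex c is strictly the most central, so c has spectral rank 1 in the clique-shadow ∂*B₈. Together with the corresponding result for B₈ itself, this shows the umbral index of B₈ equals 1: the spectral rank 1 vertices of B₈ and of ∂*B₈ are distinct.) -/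
/-- For the system (WT) with `t = 8` (the eigenequations of the
co-occurrence matrix of the 8-pleated bowtie `B₈`), the center entry `a = x(c)` is
strictly the largest: the vertex `c` has spectral rank 1 in the clique-shadow `∂*B₈`. -/
theorem shadow_eight_rank_one
    (lam a b c d e : ℝ)
    (hlam : 0 < lam) (ha : 0 < a) (hb : 0 < b) (hc : 0 < c) (hd : 0 < d) (he : 0 < e)
    (h1 : lam * a = 2 * b + 9 * (d + e))
    (h2 : lam * b = a + 9 * b + 8 * c)
    (h3 : lam * c = 2 * b)
    (h4 : lam * d = 9 * (a + e))
    (h5 : lam * e = a + d) :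
    a > b ∧ a > c ∧ a > d ∧ a > e := by
  have hB : b * (lam^2 - 9*lam - 16) = lam * a := by linear_combination lam * h2 + 8 * h3
  have hq : 0 < lam^2 - 9*lam - 16 := by
    have : 0 < b * (lam^2 - 9*lam - 16) := by rw [hB]; positivity
    exact (pos_iff_pos_of_mul_pos this).1 hb
  have hl : 10 < lam := by nlinarith
  have hD : d * (lam^2 - 9) = 9 * (lam + 1) * a := by linear_combination lam * h4 + 9 * h5
  have hl2 : 0 < lam^2 - 9 := by nlinarith
  have hA : a * (lam * (lam^3 - 2*lam^2 - 99*lam - 144)) = (lam^2 - 9) * lam * (2 * (b - a)) := by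
    linear_combination (lam^2 - 9) * lam * h1 + 9 * (lam^2-9) * h5 + 9 * (lam + 1) * hD
  have hba : b < a := by
    by_contra! h
    have h10 : lam^2 - 10*lam - 16 ≤ 0 := by
      by_contra! h'
      nlinarith [mul_pos hb h', mul_nonneg hlam.le (sub_nonneg.2 h)]
    have hneg : lam^3 - 2*lam^2 - 99*lam - 144 < 0 := by
      nlinarith [mul_nonneg hlam.le (neg_nonneg.2 h10)]
    have h0 : 0 ≤ (lam^2 - 9) * lam * (2 * (b - a)) :=
      mul_nonneg (by positivity) (by linarith)
    have h00 : 0 < a * (lam * -(lam^3 - 2*lam^2 - 99*lam - 144)) :=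
      mul_pos ha (mul_pos hlam (by linarith))
    linarith
  have h10 : 0 < lam^2 - 10*lam - 16 := by
    by_contra! h'
    nlinarith [mul_nonneg hb.le (neg_nonneg.2 h'), mul_pos hlam (sub_pos.2 hba)]
  have hl11 : 11 < lam := by nlinarith
  have h9 : 0 < lam^2 - 9*lam - 18 := by nlinarith
  have hda : d < a := by
    by_contra! h
    nlinarith [mul_nonneg hl2.le (sub_nonneg.2 h), mul_pos ha h9]
  refine ⟨hba, ?_, hda, ?_⟩
  · by_contra! h
    nlinarith [mul_pos hc (sub_pos.2 hl11)]
  · by_contra! h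
    nlinarith [mul_pos he (sub_pos.2 hl11)]
end

section
/- Let O_R be the 3-uniform hypergraph on vertices {T, B, U, P, Q, R, S} with edges {T,P,Q}, {T,R,S}, {B,Q,R}, {B,P,S}, {U,P,Q}. Let (ρ, y) be a positive eigenpair of O_R satisfying the symmetries y_P = y_Q and y_R = y_S. Then y_T > y_B. (Since in the clique-shadow ∂*O_R the vertices T and B are exchanged by an automorphism and hence have equal principal-eigenvector entries, this shows O_R is opaque: its spectral ranking differs from that of its clique-shadow.) -/
open Finset

/-- The modified red octahedron `O_R`: the 3-uniform hypergraph on the vertices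
`0 = T, 1 = B, 2 = U, 3 = P, 4 = Q, 5 = R, 6 = S` with edges
`{T,P,Q}, {T,R,S}, {B,Q,R}, {B,P,S}, {U,P,Q}`. -/
def redOctahedronEdges : Finset (Finset (Fin 7)) :=
  {{0, 3, 4}, {0, 5, 6}, {1, 4, 5}, {1, 3, 6}, {2, 3, 4}}

/-- For any positive eigenpair `(ρ, y)` of `O_R` satisfying the
symmetries `y P = y Q` and `y R = y S`, one has `y T > y B`.  (Hence `O_R` is opaque:
in its clique-shadow `T` and `B` have equal principal-eigenvector entries.) -/
theorem redOctahedron_T_gt_B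
    (ρ : ℝ) (y : Fin 7 → ℝ) (hy : ∀ v, 0 < y v)
    (heig : ∀ i : Fin 7, ρ * y i ^ 2 =
      ∑ e ∈ redOctahedronEdges.filter (fun e => i ∈ e), ∏ v ∈ e.erase i, y v)
    (hPQ : y 3 = y 4) (hRS : y 5 = y 6) :
    y 0 > y 1 := by
  have hf0 : redOctahedronEdges.filter (fun e => (0 : Fin 7) ∈ e) = {{0,3,4},{0,5,6}} := by decide
  have hf1 : redOctahedronEdges.filter (fun e => (1 : Fin 7) ∈ e) = {{1,4,5},{1,3,6}} := by decide
  have hf3 : redOctahedronEdges.filter (fun e => (3 : Fin 7) ∈ e) = {{0,3,4},{1,3,6},{2,3,4}} := by decide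
  have hf5 : redOctahedronEdges.filter (fun e => (5 : Fin 7) ∈ e) = {{0,5,6},{1,4,5}} := by decide
  have e0 : ρ * y 0 ^ 2 = y 3 * y 4 + y 5 * y 6 := by
    rw [heig 0, hf0, Finset.sum_pair (by decide),
      show ({0,3,4} : Finset (Fin 7)).erase 0 = {3,4} by decide,
      show ({0,5,6} : Finset (Fin 7)).erase 0 = {5,6} by decide,
      Finset.prod_pair (by decide), Finset.prod_pair (by decide)]
  have e1 : ρ * y 1 ^ 2 = y 4 * y 5 + y 3 * y 6 := by
    rw [heig 1, hf1, Finset.sum_pair (by decide),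
      show ({1,4,5} : Finset (Fin 7)).erase 1 = {4,5} by decide,
      show ({1,3,6} : Finset (Fin 7)).erase 1 = {3,6} by decide,
      Finset.prod_pair (by decide), Finset.prod_pair (by decide)]
  have e3 : ρ * y 3 ^ 2 = y 0 * y 4 + (y 1 * y 6 + y 2 * y 4) := by
    rw [heig 3, hf3, Finset.sum_insert (by decide), Finset.sum_pair (by decide),
      show ({0,3,4} : Finset (Fin 7)).erase 3 = {0,4} by decide,
      show ({1,3,6} : Finset (Fin 7)).erase 3 = {1,6} by decide,
      show ({2,3,4} : Finset (Fin 7)).erase 3 = {2,4} by decide,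
      Finset.prod_pair (by decide), Finset.prod_pair (by decide), Finset.prod_pair (by decide)]
  have e5 : ρ * y 5 ^ 2 = y 0 * y 6 + y 1 * y 4 := by
    rw [heig 5, hf5, Finset.sum_pair (by decide),
      show ({0,5,6} : Finset (Fin 7)).erase 5 = {0,6} by decide,
      show ({1,4,5} : Finset (Fin 7)).erase 5 = {1,4} by decide,
      Finset.prod_pair (by decide), Finset.prod_pair (by decide)]
  have h0 := hy 0
  have h1 := hy 1
  have h2 := hy 2
  have h4 := hy 4
  have h6 := hy 6
  simp only [hPQ, hRS] at e0 e1 e3 e5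
  have hρ : 0 < ρ := by
    have : 0 < ρ * y 0 ^ 2 := by rw [e0]; positivity
    exact pos_of_mul_pos_left this (by positivity)
  have hne : y 4 - y 6 ≠ 0 := by
    intro h
    have h' : y 4 = y 6 := by linarith
    rw [h'] at e3 e5
    have : 0 < y 2 * y 6 := by positivity
    linarith
  have hsq : 0 < (y 4 - y 6) ^ 2 := by positivity
  have hlt : ρ * y 1 ^ 2 < ρ * y 0 ^ 2 := by rw [e0, e1]; nlinarith
  exact lt_of_pow_lt_pow_left₀ 2 h0.le (lt_of_mul_lt_mul_left hlt hρ.le)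
end

section
/- Let O_R be the 3-uniform hypergraph on vertices {T, B, U, P, Q, R, S} with edges {T,P,Q}, {T,R,S}, {B,Q,R}, {B,P,S}, {U,P,Q}. Let (ρ, y) be a positive eigenpair of O_R satisfying the symmetries y_P = y_Q and y_R = y_S. Then y_Q ≠ y_R. -/
open Finset

/-- For any positive eigenpair `(ρ, y)` of `O_R` satisfying the
symmetries `y P = y Q` and `y R = y S`, one has `y Q ≠ y R`. -/
theorem redOctahedron_Q_ne_R
    (ρ : ℝ) (y : Fin 7 → ℝ) (hy : ∀ v, 0 < y v)
    (heig : ∀ i : Fin 7, ρ * y i ^ 2 =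
      ∑ e ∈ redOctahedronEdges.filter (fun e => i ∈ e), ∏ v ∈ e.erase i, y v)
    (hPQ : y 3 = y 4) (hRS : y 5 = y 6) :
    y 4 ≠ y 5 := by
  intro h
  have f4 : redOctahedronEdges.filter (fun e => (4 : Fin 7) ∈ e) =
      {{0, 3, 4}, {1, 4, 5}, {2, 3, 4}} := by decide
  have f5 : redOctahedronEdges.filter (fun e => (5 : Fin 7) ∈ e) =
      {{0, 5, 6}, {1, 4, 5}} := by decide
  have e1 : ({0, 3, 4} : Finset (Fin 7)).erase 4 = {0, 3} := by decide
  have e2 : ({1, 4, 5} : Finset (Fin 7)).erase 4 = {1, 5} := by decide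
  have e3 : ({2, 3, 4} : Finset (Fin 7)).erase 4 = {2, 3} := by decide
  have e4 : ({0, 5, 6} : Finset (Fin 7)).erase 5 = {0, 6} := by decide
  have e5 : ({1, 4, 5} : Finset (Fin 7)).erase 5 = {1, 4} := by decide
  have h4 := heig 4
  have h5 := heig 5
  rw [f4, Finset.sum_insert (by decide), Finset.sum_insert (by decide), Finset.sum_singleton,
    e1, e2, e3, Finset.prod_pair (by decide), Finset.prod_pair (by decide),
    Finset.prod_pair (by decide)] at h4
  rw [f5, Finset.sum_insert (by decide), Finset.sum_singleton,
    e4, e5, Finset.prod_pair (by decide), Finset.prod_pair (by decide)] at h5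
  rw [hPQ, h] at h4
  rw [← hRS, h] at h5
  have := mul_pos (hy 2) (hy 5)
  linarith
end

section
/- Let k ≥ 2 and η ≥ 1 be integers, and let S(η, k) be the k-uniform star: its vertex set consists of a center c together with η pairwise disjoint blocks of k−1 leaves each, and its edges are the η sets consisting of c together with one block. If (ρ, y) is a normalized positive eigenpair of S(η, k), then y_c^k = 1/k. -/
open Finset

/-- The edge set of the `k`-uniform star `S(η, k)`: the vertices are the center `none`
together with `η` pairwise disjoint blocks `{some (i, j) : j}` of `k − 1` leaves each,
and the `η` edges each consist of the center together with one block. -/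
def starEdges (η k : ℕ) : Finset (Finset (Option (Fin η × Fin (k - 1)))) :=
  Finset.univ.image
    (fun i : Fin η =>
      insert none ((Finset.univ : Finset (Fin (k - 1))).image (fun j => some (i, j))))

/-- If `(ρ, y)` is a normalized positive eigenpair of the `k`-uniform
star `S(η, k)`, then the center entry satisfies `y c ^ k = 1/k`. -/
theorem star_center_mass
    (η k : ℕ) (hη : 1 ≤ η) (hk : 2 ≤ k)
    (ρ : ℝ) (y : Option (Fin η × Fin (k - 1)) → ℝ) (hy : ∀ v, 0 < y v)
    (heig : ∀ i, ρ * y i ^ (k - 1) =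
      ∑ e ∈ (starEdges η k).filter (fun e => i ∈ e), ∏ v ∈ e.erase i, y v)
    (hnorm : ∑ v, y v ^ k = 1) :
    y none ^ k = 1 / k := by
  have hk1 : k - 1 + 1 = k := by omega
  set E : Fin η → Finset (Option (Fin η × Fin (k - 1))) := fun i =>
      insert none ((Finset.univ : Finset (Fin (k - 1))).image (fun j => some (i, j))) with hE
  have hmem : ∀ i a b, some (a, b) ∈ E i ↔ i = a := by
    intro i a b
    simp [hE]
  have hnone : ∀ i, none ∈ E i := by
    intro i
    simp [hE]
  have hinj : Function.Injective E := by
    intro a b hab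
    have h1 : some (a, (⟨0, by omega⟩ : Fin (k - 1))) ∈ E b := by
      rw [← hab, hmem]
    rw [hmem] at h1
    exact h1.symm
  have key : ∀ v, ρ * y v ^ k = ∑ i, if v ∈ E i then ∏ w ∈ E i, y w else 0 := by
    intro v
    have h1 : ρ * y v ^ k = (ρ * y v ^ (k - 1)) * y v := by
      rw [mul_assoc, ← pow_succ, hk1]
    rw [h1, heig v, Finset.sum_mul]
    have h2 : ∀ e ∈ (starEdges η k).filter (fun e => v ∈ e),
        (∏ w ∈ e.erase v, y w) * y v = ∏ w ∈ e, y w := by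
      intro e he
      exact Finset.prod_erase_mul _ _ (Finset.mem_filter.mp he).2
    rw [Finset.sum_congr rfl h2, Finset.sum_filter]
    have h3 : starEdges η k = Finset.univ.image E := rfl
    rw [h3, Finset.sum_image (fun a _ b _ h => hinj h)]
  have hc : ρ * y none ^ k = ∑ i, ∏ w ∈ E i, y w := by
    rw [key]
    simp only [hnone, if_true]
  have hl : ∀ a b, ρ * y (some (a, b)) ^ k = ∏ w ∈ E a, y w := by
    intro a b
    rw [key]
    simp only [hmem]
    simp
  have hpos : 0 < ∑ i, ∏ w ∈ E i, y w := by
    apply Finset.sum_pos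
    · intro i _
      exact Finset.prod_pos (fun w _ => hy w)
    · exact ⟨⟨0, by omega⟩, Finset.mem_univ _⟩
  have hρ : ρ ≠ 0 := by
    rintro rfl
    rw [← hc] at hpos
    simp at hpos
  have htot : ρ = ρ * y none ^ k + ((k - 1 : ℕ) : ℝ) * ∑ i, ∏ w ∈ E i, y w := by
    have h4 : ρ = ρ * ∑ v, y v ^ k := by rw [hnorm, mul_one]
    rw [Fintype.sum_option, mul_add, Finset.mul_sum, Fintype.sum_prod_type] at h4
    simp only [hl, Finset.sum_const, Finset.card_univ, Fintype.card_fin, nsmul_eq_mul] at h4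
    rw [← Finset.mul_sum] at h4
    exact h4
  rw [← hc] at htot
  have hkc : ((k - 1 : ℕ) : ℝ) = (k : ℝ) - 1 := by
    rw [Nat.cast_sub (by omega)]
    simp
  rw [hkc] at htot
  have hk0 : (k : ℝ) ≠ 0 := by
    have : k ≠ 0 := by omega
    exact_mod_cast this
  rw [eq_div_iff hk0]
  apply mul_left_cancel₀ hρ
  linear_combination -htot
end

section
/- Let η ≥ 1 and k ≥ 1 be integers and let W(η, k) be the windmill graph: a center vertex c together with η pairwise disjoint copies of the complete graph K_k, with c adjacent to every other vertex. If x is a strictly positive vector with A x = λ x, where A is the adjacency matrix of W(η, k) and λ ∈ ℝ, then λ = (k−1)/2 + √(((k−1)/2)² + ηk). -/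
open Finset Matrix

/-- The windmill graph `W(η, k)`: `η` pairwise vertex-disjoint copies of the complete
graph `K_k` (the vertices `some (i, j)` with block index `i`), together with a center
vertex `none` adjacent to every other vertex. -/
def windmill (η k : ℕ) : SimpleGraph (Option (Fin η × Fin k)) where
  Adj u v := u ≠ v ∧ (u = none ∨ v = none ∨ ∃ i a b, u = some (i, a) ∧ v = some (i, b))
  symm := by
    constructor
    rintro u v ⟨hne, h⟩
    refine ⟨Ne.symm hne, ?_⟩
    rcases h with h | h | ⟨i, a, b, hu, hv⟩
    · exact Or.inr (Or.inl h)
    · exact Or.inl h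
    · exact Or.inr (Or.inr ⟨i, b, a, hv, hu⟩)
  loopless := by constructor; rintro u ⟨hne, -⟩; exact hne rfl

/-- Estrada. If `x` is a strictly positive eigenvector of the adjacency
matrix of the windmill graph `W(η, k)` with eigenvalue `λ`, then
`λ = (k−1)/2 + √(((k−1)/2)² + ηk)`. -/
theorem windmill_principal_eigenvalue
    (η k : ℕ) (hη : 1 ≤ η) (hk : 1 ≤ k)
    (lam : ℝ) (x : Option (Fin η × Fin k) → ℝ) (hx : ∀ v, 0 < x v)
    (heig :
      letI : DecidableRel (windmill η k).Adj := Classical.decRel _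
      (windmill η k).adjMatrix ℝ *ᵥ x = lam • x) :
    lam = ((k : ℝ) - 1) / 2 + Real.sqrt ((((k : ℝ) - 1) / 2) ^ 2 + η * k) := by
  have hc : ∑ p : Fin η × Fin k, x (some p) = lam * x none := by
    have h := congrFun heig none
    rw [SimpleGraph.adjMatrix_mulVec_apply] at h
    simp only [Pi.smul_apply, smul_eq_mul] at h
    rw [← h, SimpleGraph.neighborFinset_eq_filter, Finset.sum_filter, Fintype.sum_option]
    simp [windmill]
  have hb : ∀ (i : Fin η) (a : Fin k),
      x none + ∑ b : Fin k, x (some (i, b)) = lam * x (some (i, a)) + x (some (i, a)) := by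
    intro i a
    have h := congrFun heig (some (i, a))
    rw [SimpleGraph.adjMatrix_mulVec_apply] at h
    simp only [Pi.smul_apply, smul_eq_mul] at h
    rw [← h, SimpleGraph.neighborFinset_eq_filter, Finset.sum_filter, Fintype.sum_option,
      Fintype.sum_prod_type]
    have h1 : (windmill η k).Adj (some (i, a)) none := by simp [windmill]
    have h2 : ∀ j b, (windmill η k).Adj (some (i, a)) (some (j, b)) ↔ (j = i ∧ b ≠ a) := by
      intro j b
      simp only [windmill]
      grind
    rw [if_pos h1, Finset.sum_eq_single i]
    · rw [← Finset.add_sum_erase _ (fun b => x (some (i, b))) (Finset.mem_univ a),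
        ← Finset.add_sum_erase _ _ (Finset.mem_univ a), if_neg (by simp [h2])]
      have h3 : ∀ y z : ℝ, y = z →
          x none + (x (some (i, a)) + y) = x none + (0 + z) + x (some (i, a)) := by
        intro y z hyz
        rw [hyz]
        ring
      apply h3
      apply Finset.sum_congr rfl
      intro b hb
      rw [if_pos]
      exact (h2 i b).2 ⟨rfl, (Finset.mem_erase.1 hb).1⟩
    · intro j _ hj
      apply Finset.sum_eq_zero
      intro b _
      rw [if_neg]
      simp [h2, hj]
    · simp
  have hsum : ∑ i : Fin η, ∑ a : Fin k, (x none + ∑ b : Fin k, x (some (i, b)))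
      = ∑ i : Fin η, ∑ a : Fin k, (lam * x (some (i, a)) + x (some (i, a))) :=
    Finset.sum_congr rfl fun i _ => Finset.sum_congr rfl fun a _ => hb i a
  rw [Fintype.sum_prod_type] at hc
  simp only [Finset.sum_add_distrib, ← Finset.mul_sum, Finset.sum_const, Finset.card_univ,
    Fintype.card_fin, nsmul_eq_mul, hc] at hsum
  have h0 := hx none
  have hpos : 0 < lam * x none := by
    rw [← hc, ← Fintype.sum_prod_type (f := fun p : Fin η × Fin k => x (some p))]
    exact Finset.sum_pos (fun p _ => hx _) ⟨(⟨0, hη⟩, ⟨0, hk⟩), Finset.mem_univ _⟩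
  have hl : 0 < lam := pos_of_mul_pos_left hpos h0.le
  have hq : lam ^ 2 - ((k : ℝ) - 1) * lam - η * k = 0 := by
    apply mul_right_cancel₀ h0.ne'
    linarith
  have hn : (0 : ℝ) ≤ η * k := by positivity
  have hge : 0 ≤ lam - ((k : ℝ) - 1) / 2 := by
    by_contra hneg
    nlinarith
  have : (((k : ℝ) - 1) / 2) ^ 2 + η * k = (lam - ((k : ℝ) - 1) / 2) ^ 2 := by linarith
  rw [this, Real.sqrt_sq hge]
  ring
end

section
/- Fix an integer k ≥ 1. For every ε > 0 there exists N such that for all η ≥ N the following holds: if x is a strictly positive vector with A x = λ x (A the adjacency matrix of the windmill graph W(η, k), λ ∈ ℝ) and Σ_v x_v² = 1, then |x_c² − 1/2| < ε, where c is the center vertex. In other words, as η → ∞ the squared principal-eigenvector entry of the center of W(η, k) tends to 1/2. -/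
open Finset Matrix

/-- Fix `k ≥ 1`.  As `η → ∞`, the squared entry at the center vertex of
any strictly positive `ℓ²`-normalized eigenvector of the adjacency matrix of the windmill
graph `W(η, k)` tends to `1/2`. -/
theorem windmill_center_mass_tendsto_half
    (k : ℕ) (hk : 1 ≤ k) :
    ∀ ε : ℝ, 0 < ε → ∃ N : ℕ, ∀ η : ℕ, N ≤ η →
      ∀ (lam : ℝ) (x : Option (Fin η × Fin k) → ℝ),
        (∀ v, 0 < x v) →
        (letI : DecidableRel (windmill η k).Adj := Classical.decRel _;
          (windmill η k).adjMatrix ℝ *ᵥ x = lam • x) →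
        (∑ v, x v ^ 2 = 1) →
        |x none ^ 2 - 1 / 2| < ε := by
  intro ε hε
  have hk1 : (1 : ℝ) ≤ k := by exact_mod_cast hk
  obtain ⟨N, hN⟩ := exists_nat_gt (((k : ℝ) / ε + k) * (k / ε))
  refine ⟨N + 1, ?_⟩
  intro η hη lam x hpos hA hnorm
  have hηN : (N : ℝ) + 1 ≤ η := by exact_mod_cast hη
  have hη0 : (0 : ℝ) < η := lt_of_lt_of_le (by positivity) hηN
  have hc := hpos none
  -- the row of the center
  have hcenter : ∑ p : Fin η × Fin k, x (some p) = lam * x none := by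
    have h := congrFun hA none
    simp only [Matrix.mulVec, dotProduct, SimpleGraph.adjMatrix_apply, Fintype.sum_option,
      Pi.smul_apply, smul_eq_mul] at h
    simpa [windmill] using h
  -- the other rows
  have hrow : ∀ i a, x none + ∑ b, x (some (i, b)) = (lam + 1) * x (some (i, a)) := by
    intro i a
    have h := congrFun hA (some (i, a))
    simp only [Matrix.mulVec, dotProduct, SimpleGraph.adjMatrix_apply, Fintype.sum_option,
      Pi.smul_apply, smul_eq_mul, Fintype.sum_prod_type] at h
    have h1 : (windmill η k).Adj (some (i, a)) none := by simp [windmill]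
    have h2 : ∀ j b, (windmill η k).Adj (some (i, a)) (some (j, b)) ↔ (i = j ∧ a ≠ b) := by
      intro j b
      simp only [windmill]
      constructor
      · rintro ⟨hne, h | h | ⟨i', a', b', hu, hv⟩⟩
        · cases h
        · cases h
        · grind
      · rintro ⟨rfl, hab⟩
        exact ⟨by simpa using hab, Or.inr (Or.inr ⟨i, a, b, rfl, rfl⟩)⟩
    simp only [h1, h2, if_true, one_mul] at h
    rw [Finset.sum_eq_single i (by
      intro j _ hj
      simp [Ne.symm hj]) (by simp)] at h
    have h3 : ∑ b, (if i = i ∧ a ≠ b then (1 : ℝ) else 0) * x (some (i, b))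
        = ∑ b, x (some (i, b)) - x (some (i, a)) := by
      have h4 : ∀ b, (if i = i ∧ a ≠ b then (1 : ℝ) else 0) * x (some (i, b))
          = x (some (i, b)) - if a = b then x (some (i, b)) else 0 := by
        intro b
        by_cases hab : a = b <;> simp [hab]
      rw [Finset.sum_congr rfl (fun b _ => h4 b), Finset.sum_sub_distrib]
      simp
    have h5 := h
    simp only [true_and] at h5 h3
    linarith [h5, h3]
  have hkη : (0 : ℝ) < η * k := by positivity
  have hlam : 0 < lam := by
    have hη1 : 0 < η := by exact_mod_cast hη0
    have : 0 < ∑ p : Fin η × Fin k, x (some p) :=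
      Finset.sum_pos (fun p _ => hpos _) ⟨(⟨0, hη1⟩, ⟨0, hk⟩), Finset.mem_univ _⟩
    rw [hcenter] at this
    exact pos_of_mul_pos_left this hc.le
  -- all entries of a block agree
  have hblock : ∀ i a, (lam + 1 - k) * x (some (i, a)) = x none := by
    intro i a
    have heq : ∀ b, x (some (i, b)) = x (some (i, a)) := by
      intro b
      have := (hrow i b).symm.trans (hrow i a)
      exact mul_left_cancel₀ (by linarith) this
    have h := hrow i a
    rw [Finset.sum_congr rfl (fun b _ => heq b)] at h
    simp at h
    linarith
  obtain ⟨μ, hμ⟩ : ∃ μ : ℝ, μ = lam + 1 - k := ⟨_, rfl⟩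
  rw [← hμ] at hblock
  have hη1 : 0 < η := by exact_mod_cast hη0
  have hμ0 : 0 < μ := by
    have h := hblock ⟨0, hη1⟩ ⟨0, hk⟩
    exact pos_of_mul_pos_left (h ▸ hc) (hpos _).le
  have hy : ∀ p, x (some p) = x none / μ := by
    rintro ⟨i, a⟩
    rw [← hblock i a]
    field_simp
  obtain ⟨c, hcdef⟩ : ∃ c, c = x none := ⟨_, rfl⟩
  rw [← hcdef] at hc hcenter ⊢
  simp only [← hcdef] at hy
  have hS : (η * k : ℝ) = lam * μ := by
    simp only [hy] at hcenter
    simp at hcenter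
    field_simp at hcenter
    linarith
  have hn : c ^ 2 * (lam + μ) = μ := by
    rw [Fintype.sum_option] at hnorm
    simp only [hy, ← hcdef] at hnorm
    simp at hnorm
    rw [hS] at hnorm
    field_simp at hnorm
    linarith
  have hbig : (k : ℝ) / ε < μ := by
    by_contra hle
    push Not at hle
    have h1 : lam ≤ k / ε + k := by linarith
    have h2 : lam * μ ≤ (k / ε + k) * (k / ε) := by
      apply mul_le_mul h1 hle hμ0.le; positivity
    nlinarith
  rw [div_lt_iff₀ hε] at hbig
  have hc2 : c ^ 2 = μ / (lam + μ) := by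
    rw [eq_div_iff (by positivity)]; exact hn
  have hd : c ^ 2 - 1 / 2 = -((k - 1) / (2 * (lam + μ))) := by
    rw [hc2, show lam = μ + k - 1 by linarith]
    have : μ + k - 1 + μ ≠ 0 := by linarith
    field_simp
    ring
  have hnn : (0 : ℝ) ≤ (k - 1) / (2 * (lam + μ)) := by
    apply div_nonneg <;> linarith
  rw [hd, abs_neg, abs_of_nonneg hnn, div_lt_iff₀ (by positivity)]
  nlinarith
end

section
/- Fix an integer k ≥ 2. For every ε > 0 there exists N such that for all η ≥ N the following holds: if (ρ, y) is a normalized positive eigenpair of the k-uniform star S(η, k) and x is a strictly positive vector with A x = λ x and Σ_v x_v² = 1, where A is the co-occurrence matrix of S(η, k) (equivalently, the adjacency matrix of the windmill graph W(η, k−1)) and λ ∈ ℝ, then |y_c^k − x_c²| > 1/2 − 1/k − ε, where c is the center vertex. Consequently the maximal Chebyshev distance Δ_k between (y_v^k)_v and (x_v²)_v over connected k-uniform hypergraphs satisfies Δ_k ≥ 1/2 − 1/k, and Δ_k → 1/2 as k → ∞. -/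
open Finset Matrix

theorem star_edge_mem_some (η k : ℕ) (i : Fin η) (p : Fin η × Fin (k - 1)) :
    some p ∈ (insert none ((Finset.univ : Finset (Fin (k - 1))).image (fun j => some (i, j))) :
      Finset (Option (Fin η × Fin (k - 1)))) ↔ p.1 = i := by
  obtain ⟨a, b⟩ := p
  simp [eq_comm]

theorem starE_sum {η k : ℕ} (hk : 2 ≤ k)
    (f : Finset (Option (Fin η × Fin (k - 1))) → ℝ) :
    ∑ e ∈ starEdges η k, f e =
      ∑ i : Fin η, f (insert none ((Finset.univ : Finset (Fin (k - 1))).image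
        (fun j => some (i, j)))) := by
  unfold starEdges
  rw [Finset.sum_image]
  intro a _ b _ h
  have h1 := star_edge_mem_some η k a (a, ⟨0, by omega⟩)
  have h2 := star_edge_mem_some η k b (a, ⟨0, by omega⟩)
  simp only at h
  rw [h] at h1
  exact h2.1 (h1.2 rfl)

theorem star_y {η k : ℕ} (hk : 2 ≤ k) (hη : 0 < η) (ρ : ℝ)
    (y : Option (Fin η × Fin (k - 1)) → ℝ) (hy : ∀ v, 0 < y v)
    (h : ∀ i, ρ * y i ^ (k - 1) =
          ∑ e ∈ (starEdges η k).filter (fun e => i ∈ e), ∏ v ∈ e.erase i, y v)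
    (hn : ∑ v, y v ^ k = 1) : y none ^ k = 1 / k := by
  have hmul : ∀ i, ρ * y i ^ k =
      ∑ e ∈ starEdges η k, if i ∈ e then ∏ v ∈ e, y v else 0 := by
    intro i
    have hkk : k = (k - 1) + 1 := by omega
    have : y i ^ k = y i ^ (k - 1) * y i := by
      conv_lhs => rw [hkk]
      rw [pow_succ]
    rw [this, ← mul_assoc, h i, Finset.sum_mul, Finset.sum_filter]
    refine Finset.sum_congr rfl fun e _ => ?_
    split_ifs with hi
    · exact Finset.prod_erase_mul e y hi
    · rfl
  simp only [starE_sum hk] at hmul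
  have hc := hmul none
  simp only [Finset.mem_insert, true_or, if_true] at hc
  have hl : ∀ p : Fin η × Fin (k - 1), ρ * y (some p) ^ k =
      ∏ v ∈ (insert none ((Finset.univ : Finset (Fin (k - 1))).image
        (fun j => some (p.1, j)))), y v := by
    intro p
    rw [hmul (some p)]
    simp only [star_edge_mem_some]
    rw [Finset.sum_ite_eq]
    simp
  set P : Fin η → ℝ := fun i => ∏ v ∈ (insert none ((Finset.univ : Finset (Fin (k - 1))).image
        (fun j => some (i, j)))), y v with hP
  have hPpos : ∀ i, 0 < P i := fun i => Finset.prod_pos fun v _ => hy v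
  have hsum : 0 < ∑ i, P i :=
    Finset.sum_pos (fun i _ => hPpos i) ⟨⟨0, hη⟩, Finset.mem_univ _⟩
  have hc' : ρ * y none ^ k = ∑ i, P i := hc
  have hyk : 0 < y none ^ k := pow_pos (hy none) k
  have hρ : ρ ≠ 0 := by
    rintro rfl
    simp at hc'
    linarith
  have htot : ρ = k * (ρ * y none ^ k) := by
    have h1 : ρ * ∑ v, y v ^ k = ρ := by rw [hn, mul_one]
    rw [Fintype.sum_option, mul_add, Finset.mul_sum] at h1
    have h2 : ∑ p : Fin η × Fin (k - 1), ρ * y (some p) ^ k = (k - 1 : ℝ) * ∑ i, P i := by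
      rw [Finset.sum_congr rfl fun p _ => hl p, Fintype.sum_prod_type]
      simp only [Finset.sum_const, Finset.card_univ, Fintype.card_fin, nsmul_eq_mul]
      rw [Finset.mul_sum, Nat.cast_sub (by omega : 1 ≤ k)]
      simp [hP]
    rw [h2, ← hc'] at h1
    linarith
  have hk0 : (k : ℝ) ≠ 0 := by positivity
  field_simp
  have : ρ * (k * y none ^ k) = ρ * 1 := by linarith
  have := mul_left_cancel₀ hρ this
  linarith

theorem star_x {η k : ℕ} (hk : 2 ≤ k) (hη : 0 < η)
    (A : Matrix (Option (Fin η × Fin (k - 1))) (Option (Fin η × Fin (k - 1))) ℝ)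
    (hA : ∀ u v, A u v =
          if u = v then 0
          else (((starEdges η k).filter (fun e => u ∈ e ∧ v ∈ e)).card : ℝ))
    (lam : ℝ) (x : Option (Fin η × Fin (k - 1)) → ℝ)
    (hx : ∀ v, 0 < x v) (h : A *ᵥ x = lam • x) (hn : ∑ v, x v ^ 2 = 1) :
    ∃ d : ℝ, 0 < d ∧ d * (d + (k - 2)) = η * (k - 1) ∧ x none ^ 2 * (2 * d + (k - 2)) = d := by
  have hcard : ∀ u v, (((starEdges η k).filter (fun e => u ∈ e ∧ v ∈ e)).card : ℝ) =
      ∑ e ∈ starEdges η k, if u ∈ e ∧ v ∈ e then (1 : ℝ) else 0 := by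
    intro u v
    rw [Finset.sum_boole]
  simp only [hcard, starE_sum hk] at hA
  have hA1 : ∀ p, A none (some p) = 1 := by
    intro p
    rw [hA]
    simp only [star_edge_mem_some]
    simp
  have hA1' : ∀ p, A (some p) none = 1 := by
    intro p
    rw [hA]
    simp only [star_edge_mem_some]
    simp
  have hA0 : A none none = 0 := by rw [hA]; simp
  have hA2 : ∀ p q, A (some p) (some q) =
      (if p.1 = q.1 then (1 : ℝ) else 0) - if p = q then 1 else 0 := by
    intro p q
    rw [hA]
    simp only [star_edge_mem_some, Option.some.injEq]
    by_cases hpq : p = q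
    · simp [hpq]
    · have : ∀ i, (p.1 = i ∧ q.1 = i) ↔ (p.1 = i ∧ p.1 = q.1) := by
        intro i
        constructor
        · rintro ⟨rfl, h2⟩; exact ⟨rfl, h2.symm⟩
        · rintro ⟨rfl, h2⟩; exact ⟨rfl, h2.symm⟩
      simp only [this, hpq, if_false, sub_zero, ite_and]
      rw [Finset.sum_ite_eq]
      simp
  have hc : ∑ p, x (some p) = lam * x none := by
    have := congrFun h none
    simpa [Matrix.mulVec, dotProduct, Fintype.sum_option, hA0, hA1] using this
  have hl : ∀ i j, x none + ∑ j', x (some (i, j')) - x (some (i, j)) = lam * x (some (i, j)) := by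
    intro i j
    have := congrFun h (some (i, j))
    simp only [Matrix.mulVec, dotProduct, Fintype.sum_option, hA1', hA2, one_mul, sub_mul,
      Finset.sum_sub_distrib, ite_mul, zero_mul, Finset.sum_ite_eq, Finset.mem_univ, if_true,
      Pi.smul_apply, smul_eq_mul] at this
    rw [Fintype.sum_prod_type, Finset.sum_comm] at this
    simp only [Finset.sum_ite_eq, Finset.mem_univ, if_true] at this
    linarith
  have hxc := hx none
  have hS : ∀ i, 0 ≤ ∑ j', x (some (i, j')) := fun i => Finset.sum_nonneg fun _ _ => (hx _).le
  have hm : ((k - 1 : ℕ) : ℝ) = k - 1 := by rw [Nat.cast_sub (by omega)]; simp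
  have i0 : Fin η := ⟨0, hη⟩
  have j0 : Fin (k - 1) := ⟨0, by omega⟩
  have hlam1 : 0 < lam + 1 := by
    have h1 := hl i0 j0
    have h2 := hS i0
    have h3 := hx (some (i0, j0))
    by_contra hneg
    nlinarith
  have hd : ∀ i j, (lam + 1 - (k - 1)) * x (some (i, j)) = x none := by
    intro i j
    have hconst : ∀ j', x (some (i, j')) = x (some (i, j)) := by
      intro j'
      have h1 := hl i j
      have h2 := hl i j'
      have : (lam + 1) * x (some (i, j')) = (lam + 1) * x (some (i, j)) := by linarith
      exact mul_left_cancel₀ hlam1.ne' this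
    have h1 := hl i j
    rw [Finset.sum_congr rfl fun j' _ => hconst j'] at h1
    simp only [Finset.sum_const, Finset.card_univ, Fintype.card_fin, nsmul_eq_mul, hm] at h1
    linarith
  obtain ⟨d, hdd⟩ : ∃ d, d = lam + 1 - ((k : ℝ) - 1) := ⟨_, rfl⟩
  rw [← hdd] at hd
  have hlam : lam = d + (k - 2) := by linarith
  have hdpos : 0 < d := by
    have h1 := hd i0 j0
    have h3 := hx (some (i0, j0))
    by_contra hneg
    nlinarith
  have ht : ∀ p, x (some p) = x none / d := by
    rintro ⟨i, j⟩
    rw [eq_div_iff hdpos.ne', ← hd i j, mul_comm]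
  rw [Fintype.sum_option] at hn
  simp only [ht, Finset.sum_const, Finset.card_univ, Fintype.card_prod, Fintype.card_fin,
    nsmul_eq_mul, Nat.cast_mul, hm] at hc hn
  have e1 : d * (d + (k - 2)) = η * (k - 1) := by
    rw [← hlam]
    field_simp at hc
    linarith
  refine ⟨d, hdpos, e1, ?_⟩
  rw [← e1] at hn
  field_simp at hn
  linarith

/-- Fix `k ≥ 2`.  For every `ε > 0` there is `N` such that for all
`η ≥ N`: if `(ρ, y)` is a normalized positive eigenpair of the `k`-uniform star `S(η, k)`
and `x` is a strictly positive `ℓ²`-normalized eigenvector of the co-occurrence matrix of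
`S(η, k)` (the adjacency matrix of the windmill graph `W(η, k−1)`), then the entries at
the center `c` satisfy `|y c ^ k − x c ^ 2| > 1/2 − 1/k − ε`.  Consequently the maximal
Chebyshev distance `Δ_k` satisfies `Δ_k ≥ 1/2 − 1/k`, so `Δ_k → 1/2` as `k → ∞`. -/
theorem star_windmill_chebyshev_lower_bound
    (k : ℕ) (hk : 2 ≤ k) :
    ∀ ε : ℝ, 0 < ε → ∃ N : ℕ, ∀ η : ℕ, N ≤ η →
      ∀ (ρ : ℝ) (y : Option (Fin η × Fin (k - 1)) → ℝ),
        (∀ v, 0 < y v) →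
        (∀ i, ρ * y i ^ (k - 1) =
          ∑ e ∈ (starEdges η k).filter (fun e => i ∈ e), ∏ v ∈ e.erase i, y v) →
        (∑ v, y v ^ k = 1) →
      ∀ (A : Matrix (Option (Fin η × Fin (k - 1))) (Option (Fin η × Fin (k - 1))) ℝ),
        (∀ u v, A u v =
          if u = v then 0
          else (((starEdges η k).filter (fun e => u ∈ e ∧ v ∈ e)).card : ℝ)) →
      ∀ (lam : ℝ) (x : Option (Fin η × Fin (k - 1)) → ℝ),
        (∀ v, 0 < x v) →
        A *ᵥ x = lam • x →
        (∑ v, x v ^ 2 = 1) →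
        |y none ^ k - x none ^ 2| > 1 / 2 - 1 / k - ε := by
  intro ε hε
  obtain ⟨N, hN⟩ := exists_nat_gt (((k : ℝ) + k / ε) ^ 2)
  refine ⟨N + 1, fun η hη ρ y hy hye hyn A hA lam x hx hxe hxn => ?_⟩
  have hη0 : 0 < η := by omega
  have hyk := star_y hk hη0 ρ y hy hye hyn
  obtain ⟨d, hd, h1, h2⟩ := star_x hk hη0 A hA lam x hx hxe hxn
  have hk2 : (2 : ℝ) ≤ k := by exact_mod_cast hk
  have hηN : (N : ℝ) + 1 ≤ η := by exact_mod_cast hη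
  have hkε : 0 < (k : ℝ) / ε := by positivity
  have hbig : ((k : ℝ) + k / ε) ^ 2 < (k + d) ^ 2 := by nlinarith
  have hlt : (k : ℝ) + k / ε < k + d := lt_of_pow_lt_pow_left₀ 2 (by positivity) hbig
  have hde : (k : ℝ) < d * ε := by
    rw [← div_lt_iff₀ hε]; linarith
  have hx2 : 1 / 2 - ε < x none ^ 2 := by
    by_contra hneg
    push Not at hneg
    have h3 : d ≤ (1 / 2 - ε) * (2 * d + (k - 2)) := by
      rw [← h2]
      conv_rhs => rw [h2]
      have := mul_le_mul_of_nonneg_right hneg (by linarith : (0 : ℝ) ≤ 2 * d + (k - 2))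
      linarith
    nlinarith
  rw [hyk]
  have := neg_abs_le (1 / (k : ℝ) - x none ^ 2)
  linarith
end

section
/- Let t ≥ 1 be an integer and let ρ, α, β, γ, δ, ε be strictly positive reals satisfying the system (BT): ρα² = β² + (t+1)δε, ρβ² = αβ + tβγ, ργ² = β², ρδ² = (t+1)αε, ρε² = αδ, together with the normalization α³ + 2β³ + tγ³ + δ³ + (t+1)ε³ = 1. Then the three color-class identities hold: α³ + tγ³ = 1/3, β³ + δ³ = 1/3, and β³ + (t+1)ε³ = 1/3. (These express that the t-pleated bowtie B_t is a 3-partite 3-uniform hypergraph with color classes {c, r₃, …, r_{t+2}}, {r₁, ℓ₁}, and {r₂, ℓ₂, …, ℓ_{t+2}}, each carrying one third of the k-norm mass of the principal eigenvector.) -/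
/-- For the system (BT) of eigenequations of the t-pleated bowtie `B_t`
together with the normalization `α³ + 2β³ + tγ³ + δ³ + (t+1)ε³ = 1`, each of the three
color classes of the 3-partite structure of `B_t` carries one third of the mass:
`α³ + tγ³ = 1/3`, `β³ + δ³ = 1/3`, and `β³ + (t+1)ε³ = 1/3`. -/
theorem bowtie_color_class_identities (t : ℕ) (ht : 1 ≤ t)
    (ρ α β γ δ ε : ℝ)
    (hρ : 0 < ρ) (hα : 0 < α) (hβ : 0 < β) (hγ : 0 < γ) (hδ : 0 < δ) (hε : 0 < ε)
    (h1 : ρ * α ^ 2 = β ^ 2 + (t + 1) * δ * ε)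
    (h2 : ρ * β ^ 2 = α * β + t * β * γ)
    (h3 : ρ * γ ^ 2 = β ^ 2)
    (h4 : ρ * δ ^ 2 = (t + 1) * α * ε)
    (h5 : ρ * ε ^ 2 = α * δ)
    (hnorm : α ^ 3 + 2 * β ^ 3 + t * γ ^ 3 + δ ^ 3 + (t + 1) * ε ^ 3 = 1) :
    α ^ 3 + t * γ ^ 3 = 1 / 3 ∧ β ^ 3 + δ ^ 3 = 1 / 3 ∧ β ^ 3 + (t + 1) * ε ^ 3 = 1 / 3 := by
  have hAB : α ^ 3 + t * γ ^ 3 = β ^ 3 + δ ^ 3 := by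
    apply mul_left_cancel₀ hρ.ne'
    linear_combination α * h1 + t * γ * h3 - β * h2 - δ * h4
  have hBC : β ^ 3 + δ ^ 3 = β ^ 3 + (t + 1) * ε ^ 3 := by
    apply mul_left_cancel₀ hρ.ne'
    linear_combination δ * h4 - (t + 1) * ε * h5
  refine ⟨?_, ?_, ?_⟩ <;> linarith
end
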